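/- Fisher information of a random projective measurement (diagonal entries): let Y₁, Y₂ be Hermitian d×d matrices such that every d×d complex matrix commuting with both Y₁ and Y₂ is a scalar multiple of the identity. For ν = 1, 2 let Y_ν = Σ_i β_{ν,i} P_{ν,i} be the spectral decomposition of Y_ν (P_{ν,i} the pairwise orthogonal projections onto the distinct eigenspaces, summing to I), let q₁, q₂ > 0 with q₁ + q₂ = 1, and let M be the POVM with elements {q_ν P_{ν,i}}. Let y_ν ∈ ℝ^{d²−1} be the coordinate vector of Y_ν. Then for ν = 1, 2, any u ∈ ℝ^{d²−1} with J(M)u = y_ν satisfies y_ν · u = Var_ρ(Y_ν)/q_ν. Equivalently, the measurement error is ε(Y_ν; M) = (q_ν^{-1} − 1)Var_ρ(Y_ν). -/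

import Mathlib

open Matrix BigOperators ComplexOrder

/-!
The argument is by duality between the Fisher matrix and observables. Put `X = ∑ j, u j • Λ j`, and
`x k = Tr(X P k) / Tr(ρ P k)` for each projection `P k` of either spectral decomposition. Since the
`Λ i` together with the identity span the Hermitian matrices, `J u = y₁` says exactly that
`q₁ A + q₂ B = Y₁ - s 1` for some real `s`, where `A = ∑ i, x i • P₁ i` and `B = ∑ i, x i • P₂ i`
(`eq_smul_one_of_trace_basis_eq_zero`).

Here `B` commutes with `Y₂` by construction and with `Y₁` because `A` and `Y₁` do. Irreducibility
makes `B` a scalar `b`, so `Tr(X P₂ i) = b Tr(ρ P₂ i)`; summing over `i` gives `b = Tr X = 0`.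
Hence `q₁ x i = β₁ i - s`, i.e. `Tr(X P₁ i) = (β₁ i - s) Tr(ρ P₁ i) / q₁`. Summing over `i` gives
`s = Tr(ρ Y₁)`, and `y₁ · u = Tr(X Y₁) = ∑ i, β₁ i Tr(X P₁ i)` is the variance divided by `q₁`.
Invertibility of `J` is never needed. The argument is carried out in
`fisher_diagonal_first`; the claim for `Y₂` is the same lemma with the two observables exchanged.
-/

/-- Faithfulness of `ρ` makes every outcome probability nonzero, so that the quotients in the
Fisher matrix are genuine. -/
lemma trace_mul_proj_re_pos {d : ℕ} {ρ P : Matrix (Fin d) (Fin d) ℂ} (hρ : ρ.PosDef)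
    (hP : P.IsHermitian) (hPP : P * P = P) (hne : P ≠ 0) : 0 < (ρ * P).trace.re := by
  have h1 : (ρ * P).trace = ∑ j, star (P.col j) ⬝ᵥ (ρ *ᵥ P.col j) := by
    have h2 : (ρ * P).trace = (Pᴴ * (ρ * P)).trace := by
      rw [hP.eq, Matrix.trace_mul_comm P, Matrix.mul_assoc, hPP]
    rw [h2]
    rfl
  obtain ⟨j, hj⟩ : ∃ j, P.col j ≠ 0 := by
    by_contra! h
    apply hne
    ext a b
    exact congrFun (h b) a
  have h3 : 0 < (ρ * P).trace := by
    rw [h1]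
    exact Finset.sum_pos' (fun i _ => hρ.posSemidef.dotProduct_mulVec_nonneg _)
      ⟨j, Finset.mem_univ _, hρ.dotProduct_mulVec_pos hj⟩
  exact (Complex.lt_def.mp h3).1

/-- A Hermitian matrix orthogonal to a basis of the traceless Hermitian matrices is a real
multiple of the identity. -/
lemma eq_smul_one_of_trace_basis_eq_zero {d n : ℕ} (hd : 2 ≤ d)
    {Λ : Fin n → Matrix (Fin d) (Fin d) ℂ}
    (hΛtrace : ∀ i, (Λ i).trace = 0)
    (hΛortho : ∀ i j, (Λ i * Λ j).trace = if i = j then 1 else 0)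
    (hΛspan : ∀ X : Matrix (Fin d) (Fin d) ℂ, X.IsHermitian → X.trace = 0 →
      ∃ c : Fin n → ℝ, X = ∑ i, (c i : ℂ) • Λ i)
    {D : Matrix (Fin d) (Fin d) ℂ} (hD : D.IsHermitian)
    (h0 : ∀ i, (Λ i * D).trace.re = 0) :
    ∃ s : ℝ, D = (s : ℂ) • (1 : Matrix (Fin d) (Fin d) ℂ) := by
  have hd0 : (d : ℂ) ≠ 0 := by
    have : d ≠ 0 := by omega
    exact_mod_cast this
  have htr : ((D.trace.re : ℝ) : ℂ) = D.trace := by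
    apply Complex.conj_eq_iff_re.mp
    have := Matrix.trace_conjTranspose D
    rw [hD.eq] at this
    exact this.symm
  set s : ℝ := D.trace.re / d with hs
  have hsc : (s : ℂ) = D.trace / d := by
    rw [hs]; push_cast; rw [htr]
  have hherm : (D - (s : ℂ) • (1 : Matrix (Fin d) (Fin d) ℂ)).IsHermitian := by
    rw [Matrix.IsHermitian, Matrix.conjTranspose_sub, hD.eq, Matrix.conjTranspose_smul]
    simp
  have htrace : (D - (s : ℂ) • (1 : Matrix (Fin d) (Fin d) ℂ)).trace = 0 := by
    rw [Matrix.trace_sub, Matrix.trace_smul, hsc]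
    simp only [Matrix.trace_one, Fintype.card_fin, smul_eq_mul]
    field_simp
    simp
  obtain ⟨c, hc⟩ := hΛspan _ hherm htrace
  refine ⟨s, sub_eq_zero.mp ?_⟩
  rw [hc]
  refine Finset.sum_eq_zero fun i _ => ?_
  have h1 : (Λ i * (D - (s : ℂ) • (1 : Matrix (Fin d) (Fin d) ℂ))).trace = c i := by
    rw [hc, Finset.mul_sum, Matrix.trace_sum]
    simp [hΛortho]
  have h2 : (Λ i * (D - (s : ℂ) • (1 : Matrix (Fin d) (Fin d) ℂ))).trace = (Λ i * D).trace := by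
    rw [Matrix.mul_sub, Matrix.trace_sub]
    simp [hΛtrace]
  have h3 : c i = 0 := by
    have := h0 i
    rw [← h2, h1] at this
    simpa using this
  simp [h3]

lemma sum_smul_proj_mul {d : ℕ} {ι : Type} [Fintype ι] [DecidableEq ι]
    {P : ι → Matrix (Fin d) (Fin d) ℂ}
    (horth : ∀ i j, P i * P j = if i = j then P i else 0) (a : ι → ℂ) (j : ι) :
    (∑ i, a i • P i) * P j = a j • P j := by
  simp [Finset.sum_mul, horth]

lemma sum_smul_proj_mul_sum {d : ℕ} {ι : Type} [Fintype ι] [DecidableEq ι]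
    {P : ι → Matrix (Fin d) (Fin d) ℂ}
    (horth : ∀ i j, P i * P j = if i = j then P i else 0) (a b : ι → ℂ) :
    (∑ i, a i • P i) * (∑ i, b i • P i) = ∑ i, (a i * b i) • P i := by
  rw [Finset.mul_sum]
  refine Finset.sum_congr rfl fun j _ => ?_
  rw [Matrix.mul_smul, sum_smul_proj_mul horth, smul_smul, mul_comm]

lemma trace_re_mul_sum_smul {d : ℕ} {ι : Type} [Fintype ι]
    (X : Matrix (Fin d) (Fin d) ℂ) (P : ι → Matrix (Fin d) (Fin d) ℂ) (a : ι → ℝ) :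
    (X * ∑ i, (a i : ℂ) • P i).trace.re = ∑ i, a i * (X * P i).trace.re := by
  simp [Finset.mul_sum, Matrix.trace_sum]

lemma isHermitian_sum_smul {d : ℕ} {ι : Type} [Fintype ι]
    {P : ι → Matrix (Fin d) (Fin d) ℂ} (hP : ∀ i, (P i).IsHermitian) (a : ι → ℝ) :
    (∑ i, (a i : ℂ) • P i).IsHermitian := by
  rw [Matrix.IsHermitian, Matrix.conjTranspose_sum]
  refine Finset.sum_congr rfl fun i _ => ?_
  rw [Matrix.conjTranspose_smul, (hP i).eq]
  simp

/-- The claim for the first observable, with the Fisher matrix split into the contributions of the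
two projective measurements so that the roles of the observables can be exchanged. -/
lemma fisher_diagonal_first {d n : ℕ} (hd : 2 ≤ d)
    {ρ : Matrix (Fin d) (Fin d) ℂ}
    (hρ : ρ.PosDef) (hρtr : ρ.trace = 1)
    {Λ : Fin n → Matrix (Fin d) (Fin d) ℂ}
    (hΛtrace : ∀ i, (Λ i).trace = 0)
    (hΛortho : ∀ i j, (Λ i * Λ j).trace = if i = j then 1 else 0)
    (hΛspan : ∀ X : Matrix (Fin d) (Fin d) ℂ, X.IsHermitian → X.trace = 0 →
      ∃ c : Fin n → ℝ, X = ∑ i, (c i : ℂ) • Λ i)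
    {Y₁ Y₂ : Matrix (Fin d) (Fin d) ℂ}
    (hirr : ∀ Z : Matrix (Fin d) (Fin d) ℂ, Z * Y₁ = Y₁ * Z → Z * Y₂ = Y₂ * Z →
      ∃ c : ℂ, Z = c • (1 : Matrix (Fin d) (Fin d) ℂ))
    {ι₁ ι₂ : Type} [Fintype ι₁] [Fintype ι₂] [DecidableEq ι₁] [DecidableEq ι₂]
    {P₁ : ι₁ → Matrix (Fin d) (Fin d) ℂ}
    {P₂ : ι₂ → Matrix (Fin d) (Fin d) ℂ}
    (hP₁herm : ∀ i, (P₁ i).IsHermitian)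
    (hP₂herm : ∀ i, (P₂ i).IsHermitian)
    (hP₁orth : ∀ i j, P₁ i * P₁ j = if i = j then P₁ i else 0)
    (hP₂orth : ∀ i j, P₂ i * P₂ j = if i = j then P₂ i else 0)
    (hP₁ne : ∀ i, P₁ i ≠ 0)
    (hP₂ne : ∀ i, P₂ i ≠ 0)
    (hP₁sum : ∑ i, P₁ i = 1)
    (hP₂sum : ∑ i, P₂ i = 1)
    {β₁ : ι₁ → ℝ} {β₂ : ι₂ → ℝ}
    (hspec₁ : Y₁ = ∑ i, (β₁ i : ℂ) • P₁ i)
    (hspec₂ : Y₂ = ∑ i, (β₂ i : ℂ) • P₂ i)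
    {q₁ q₂ : ℝ} (hq₁ : 0 < q₁) (hq₂ : 0 < q₂)
    {J : Matrix (Fin n) (Fin n) ℝ}
    (hJ : ∀ i j, J i j =
      ∑ k, q₁ * ((Λ i * P₁ k).trace.re * (Λ j * P₁ k).trace.re / (ρ * P₁ k).trace.re) +
      ∑ k, q₂ * ((Λ i * P₂ k).trace.re * (Λ j * P₂ k).trace.re / (ρ * P₂ k).trace.re))
    {y : Fin n → ℝ}
    (hy : ∀ i, y i = ((Λ i * Y₁).trace).re)
    (u : Fin n → ℝ) (hu : J *ᵥ u = y) :
    y ⬝ᵥ u = ((ρ * Y₁ ^ 2).trace.re - ((ρ * Y₁).trace.re) ^ 2) / q₁ := by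
  have hr₁ : ∀ i, 0 < (ρ * P₁ i).trace.re := fun i =>
    trace_mul_proj_re_pos hρ (hP₁herm i) (by simpa using hP₁orth i i) (hP₁ne i)
  have hr₂ : ∀ i, 0 < (ρ * P₂ i).trace.re := fun i =>
    trace_mul_proj_re_pos hρ (hP₂herm i) (by simpa using hP₂orth i i) (hP₂ne i)
  set X : Matrix (Fin d) (Fin d) ℂ := ∑ j, (u j : ℂ) • Λ j with hX
  have hXtr : X.trace = 0 := by simp [hX, Matrix.trace_sum, hΛtrace]
  have hXmul : ∀ Z : Matrix (Fin d) (Fin d) ℂ,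
      (X * Z).trace.re = ∑ j, (Λ j * Z).trace.re * u j := by
    intro Z
    simp [hX, Finset.sum_mul, Matrix.trace_sum, mul_comm]
  obtain ⟨x₁, hx₁⟩ : ∃ x : ι₁ → ℝ, ∀ k, (X * P₁ k).trace.re = x k * (ρ * P₁ k).trace.re :=
    ⟨fun k => (X * P₁ k).trace.re / (ρ * P₁ k).trace.re,
      fun k => (div_mul_cancel₀ _ (hr₁ k).ne').symm⟩
  obtain ⟨x₂, hx₂⟩ : ∃ x : ι₂ → ℝ, ∀ k, (X * P₂ k).trace.re = x k * (ρ * P₂ k).trace.re :=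
    ⟨fun k => (X * P₂ k).trace.re / (ρ * P₂ k).trace.re,
      fun k => (div_mul_cancel₀ _ (hr₂ k).ne').symm⟩
  set A : Matrix (Fin d) (Fin d) ℂ := ∑ k, (x₁ k : ℂ) • P₁ k with hA
  set B : Matrix (Fin d) (Fin d) ℂ := ∑ k, (x₂ k : ℂ) • P₂ k with hB
  have hAherm : A.IsHermitian := isHermitian_sum_smul hP₁herm x₁
  have hBherm : B.IsHermitian := isHermitian_sum_smul hP₂herm x₂
  have hYherm : Y₁.IsHermitian := hspec₁ ▸ isHermitian_sum_smul hP₁herm β₁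
  -- The contribution of one projective measurement to `J u`, rewritten through `X`.
  have key : ∀ (ι : Type) [Fintype ι] (P : ι → Matrix (Fin d) (Fin d) ℂ) (x : ι → ℝ) (q : ℝ),
      (∀ k, 0 < (ρ * P k).trace.re) → (∀ k, (X * P k).trace.re = x k * (ρ * P k).trace.re) →
      ∀ i, ∑ j, (∑ k, q * ((Λ i * P k).trace.re * (Λ j * P k).trace.re / (ρ * P k).trace.re)) * u j
        = q * (Λ i * ∑ k, (x k : ℂ) • P k).trace.re := by
    intro ι _ P x q hr hx i
    rw [trace_re_mul_sum_smul, Finset.mul_sum]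
    simp_rw [Finset.sum_mul]
    rw [Finset.sum_comm]
    refine Finset.sum_congr rfl fun k _ => ?_
    have h1 : x k = (∑ j, (Λ j * P k).trace.re * u j) / (ρ * P k).trace.re := by
      rw [← hXmul, hx, mul_div_cancel_right₀ _ (hr k).ne']
    rw [h1, Finset.sum_div, Finset.sum_mul, Finset.mul_sum]
    refine Finset.sum_congr rfl fun j _ => ?_
    ring
  have hJu : ∀ i, (Λ i * Y₁).trace.re = q₁ * (Λ i * A).trace.re + q₂ * (Λ i * B).trace.re := by
    intro i
    rw [← hy, ← hu, ← key ι₁ P₁ x₁ q₁ hr₁ hx₁ i, ← key ι₂ P₂ x₂ q₂ hr₂ hx₂ i,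
      ← Finset.sum_add_distrib]
    simp only [Matrix.mulVec, dotProduct, hJ, add_mul]
  have hsmul : ∀ (q : ℝ) {Z : Matrix (Fin d) (Fin d) ℂ}, Z.IsHermitian →
      ((q : ℂ) • Z).IsHermitian := by
    intro q Z hZ
    rw [Matrix.IsHermitian, Matrix.conjTranspose_smul, hZ.eq]
    simp
  obtain ⟨s, hs⟩ := eq_smul_one_of_trace_basis_eq_zero hd hΛtrace hΛortho hΛspan
    (D := Y₁ - ((q₁ : ℂ) • A + (q₂ : ℂ) • B))
    (hYherm.sub ((hsmul q₁ hAherm).add (hsmul q₂ hBherm)))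
    (fun i => by
      have := hJu i
      simp [Matrix.mul_sub, Matrix.mul_add, this])
  have hq₂c : (q₂ : ℂ) ≠ 0 := by exact_mod_cast hq₂.ne'
  have hAY : A * Y₁ = Y₁ * A := by
    rw [hA, hspec₁, sum_smul_proj_mul_sum hP₁orth, sum_smul_proj_mul_sum hP₁orth]
    simp_rw [mul_comm]
  have hBY₂ : B * Y₂ = Y₂ * B := by
    rw [hB, hspec₂, sum_smul_proj_mul_sum hP₂orth, sum_smul_proj_mul_sum hP₂orth]
    simp_rw [mul_comm]
  have hBeq : (q₂ : ℂ) • B = Y₁ - (q₁ : ℂ) • A - (s : ℂ) • (1 : Matrix (Fin d) (Fin d) ℂ) := by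
    rw [← hs]; abel
  have hBY₁ : B * Y₁ = Y₁ * B := by
    apply smul_right_injective _ hq₂c
    change (q₂ : ℂ) • (B * Y₁) = (q₂ : ℂ) • (Y₁ * B)
    rw [← Matrix.smul_mul, ← Matrix.mul_smul, hBeq]
    simp [Matrix.sub_mul, Matrix.mul_sub, hAY]
  obtain ⟨b, hb⟩ := hirr B hBY₁ hBY₂
  have hxb : ∀ k, (x₂ k : ℂ) = b := by
    intro k
    have h1 := sum_smul_proj_mul hP₂orth (fun k => (x₂ k : ℂ)) k
    rw [← hB, hb, Matrix.smul_mul, Matrix.one_mul] at h1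
    exact (smul_left_injective ℂ (hP₂ne k) h1).symm
  have hsum₂ : ∀ Z : Matrix (Fin d) (Fin d) ℂ, ∑ k, (Z * P₂ k).trace.re = Z.trace.re := by
    intro Z
    have h := trace_re_mul_sum_smul Z P₂ (fun _ => 1)
    simpa [hP₂sum] using h.symm
  have hsum₁ : ∀ Z : Matrix (Fin d) (Fin d) ℂ, ∑ k, (Z * P₁ k).trace.re = Z.trace.re := by
    intro Z
    have h := trace_re_mul_sum_smul Z P₁ (fun _ => 1)
    simpa [hP₁sum] using h.symm
  have hxb' : ∀ k, x₂ k = b.re := fun k => by rw [← hxb k, Complex.ofReal_re]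
  have hbre : b.re = 0 := by
    have h := hsum₂ X
    simp_rw [hx₂, hxb'] at h
    rw [← Finset.mul_sum, hsum₂, hρtr, hXtr] at h
    simpa using h
  have hB0 : B = 0 := by
    rw [hB]
    exact Finset.sum_eq_zero fun k _ => by simp [hxb', hbre]
  have hx : ∀ k, q₁ * x₁ k = β₁ k - s := by
    intro k
    have h1 : ((q₁ : ℂ) • A) * P₁ k = (Y₁ - (s : ℂ) • (1 : Matrix (Fin d) (Fin d) ℂ)) * P₁ k := by
      rw [← hs, hB0]; simp
    rw [Matrix.sub_mul, Matrix.smul_mul, Matrix.smul_mul, Matrix.one_mul, hspec₁, hA,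
      sum_smul_proj_mul hP₁orth, sum_smul_proj_mul hP₁orth, smul_smul, ← sub_smul] at h1
    have h2 := smul_left_injective ℂ (hP₁ne k) h1
    exact_mod_cast h2
  have hE : (ρ * Y₁).trace.re = ∑ k, β₁ k * (ρ * P₁ k).trace.re := by
    rw [hspec₁, trace_re_mul_sum_smul]
  have hE2 : (ρ * Y₁ ^ 2).trace.re = ∑ k, β₁ k ^ 2 * (ρ * P₁ k).trace.re := by
    rw [← trace_re_mul_sum_smul, pow_two, hspec₁, sum_smul_proj_mul_sum hP₁orth]
    simp [pow_two]
  have hρ1 : ∑ k, (ρ * P₁ k).trace.re = 1 := by rw [hsum₁, hρtr]; simp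
  have hsE : s = (ρ * Y₁).trace.re := by
    have h : q₁ * ∑ k, (X * P₁ k).trace.re = 0 := by rw [hsum₁, hXtr]; simp
    simp_rw [hx₁] at h
    rw [Finset.mul_sum] at h
    simp_rw [← mul_assoc, hx, sub_mul] at h
    rw [Finset.sum_sub_distrib, ← Finset.mul_sum, hρ1, ← hE] at h
    linarith
  rw [eq_div_iff hq₁.ne']
  have hyu : y ⬝ᵥ u = ∑ k, β₁ k * (x₁ k * (ρ * P₁ k).trace.re) := by
    simp_rw [← hx₁]
    rw [← trace_re_mul_sum_smul, ← hspec₁, hXmul]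
    simp only [dotProduct, hy]
  rw [hyu, hE2, pow_two ((ρ * Y₁).trace.re)]
  nth_rewrite 1 [← hsE]
  rw [hE, Finset.sum_mul, Finset.mul_sum, ← Finset.sum_sub_distrib]
  refine Finset.sum_congr rfl fun k _ => ?_
  linear_combination (β₁ k * (ρ * P₁ k).trace.re) * hx k

/-- Fisher information of a random projective measurement, diagonal entries:
`y_ν · J(M)⁻¹ y_ν = Var_ρ(Y_ν)/q_ν`, i.e. `ε(Y_ν;M) = (q_ν⁻¹ − 1) Var_ρ(Y_ν)`. -/
theorem random_projective_fisher_diagonal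
    (d : ℕ) (hd : 2 ≤ d)
    (ρ : Matrix (Fin d) (Fin d) ℂ)
    (hρ : ρ.PosDef) (hρtr : ρ.trace = 1)
    (Λ : Fin (d ^ 2 - 1) → Matrix (Fin d) (Fin d) ℂ)
    (hΛherm : ∀ i, (Λ i).IsHermitian)
    (hΛtrace : ∀ i, (Λ i).trace = 0)
    (hΛortho : ∀ i j, (Λ i * Λ j).trace = if i = j then 1 else 0)
    (hΛspan : ∀ X : Matrix (Fin d) (Fin d) ℂ, X.IsHermitian → X.trace = 0 →
      ∃ c : Fin (d ^ 2 - 1) → ℝ, X = ∑ i, (c i : ℂ) • Λ i)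
    (Y₁ Y₂ : Matrix (Fin d) (Fin d) ℂ)
    (hY₁ : Y₁.IsHermitian) (hY₂ : Y₂.IsHermitian)
    (hirr : ∀ Z : Matrix (Fin d) (Fin d) ℂ, Z * Y₁ = Y₁ * Z → Z * Y₂ = Y₂ * Z →
      ∃ c : ℂ, Z = c • (1 : Matrix (Fin d) (Fin d) ℂ))
    (ι₁ ι₂ : Type) [Fintype ι₁] [Fintype ι₂] [DecidableEq ι₁] [DecidableEq ι₂]
    (P₁ : ι₁ → Matrix (Fin d) (Fin d) ℂ)
    (P₂ : ι₂ → Matrix (Fin d) (Fin d) ℂ)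
    (hP₁herm : ∀ i, (P₁ i).IsHermitian)
    (hP₂herm : ∀ i, (P₂ i).IsHermitian)
    (hP₁orth : ∀ i j, P₁ i * P₁ j = if i = j then P₁ i else 0)
    (hP₂orth : ∀ i j, P₂ i * P₂ j = if i = j then P₂ i else 0)
    (hP₁ne : ∀ i, P₁ i ≠ 0)
    (hP₂ne : ∀ i, P₂ i ≠ 0)
    (hP₁sum : ∑ i, P₁ i = 1)
    (hP₂sum : ∑ i, P₂ i = 1)
    (β₁ : ι₁ → ℝ) (β₂ : ι₂ → ℝ)
    (hβ₁ : Function.Injective β₁) (hβ₂ : Function.Injective β₂)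
    (hspec₁ : Y₁ = ∑ i, (β₁ i : ℂ) • P₁ i)
    (hspec₂ : Y₂ = ∑ i, (β₂ i : ℂ) • P₂ i)
    (q₁ q₂ : ℝ) (hq₁ : 0 < q₁) (hq₂ : 0 < q₂) (hq : q₁ + q₂ = 1)
    (M : ι₁ ⊕ ι₂ → Matrix (Fin d) (Fin d) ℂ)
    (hM : M = Sum.elim (fun i => (q₁ : ℂ) • P₁ i) (fun i => (q₂ : ℂ) • P₂ i))
    (J : Matrix (Fin (d ^ 2 - 1)) (Fin (d ^ 2 - 1)) ℝ)
    (hJ : ∀ i j, J i j =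
      ∑ k, ((Λ i * M k).trace.re * (Λ j * M k).trace.re) / (ρ * M k).trace.re)
    (y₁ y₂ : Fin (d ^ 2 - 1) → ℝ)
    (hy₁ : ∀ i, y₁ i = ((Λ i * Y₁).trace).re)
    (hy₂ : ∀ i, y₂ i = ((Λ i * Y₂).trace).re) :
    (∀ u : Fin (d ^ 2 - 1) → ℝ, J *ᵥ u = y₁ →
      y₁ ⬝ᵥ u = ((ρ * Y₁ ^ 2).trace.re - ((ρ * Y₁).trace.re) ^ 2) / q₁) ∧
    (∀ u : Fin (d ^ 2 - 1) → ℝ, J *ᵥ u = y₂ →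
      y₂ ⬝ᵥ u = ((ρ * Y₂ ^ 2).trace.re - ((ρ * Y₂).trace.re) ^ 2) / q₂) := by
  have hdiv : ∀ q a b r : ℝ, 0 < q → (q * a) * (q * b) / (q * r) = q * (a * b / r) := by
    intro q a b r hq0
    rw [mul_mul_mul_comm, mul_assoc q q, mul_div_mul_left _ _ hq0.ne', mul_div_assoc]
  have hJ' : ∀ i j, J i j =
      ∑ k, q₁ * ((Λ i * P₁ k).trace.re * (Λ j * P₁ k).trace.re / (ρ * P₁ k).trace.re) +
      ∑ k, q₂ * ((Λ i * P₂ k).trace.re * (Λ j * P₂ k).trace.re / (ρ * P₂ k).trace.re) := by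
    intro i j
    rw [hJ, hM, Fintype.sum_sum_type]
    simp [hdiv _ _ _ _ hq₁, hdiv _ _ _ _ hq₂]
  refine ⟨fun u hu => ?_, fun u hu => ?_⟩
  · exact fisher_diagonal_first hd hρ hρtr hΛtrace hΛortho hΛspan hirr hP₁herm hP₂herm
      hP₁orth hP₂orth hP₁ne hP₂ne hP₁sum hP₂sum hspec₁ hspec₂ hq₁ hq₂ hJ' hy₁ u hu
  · exact fisher_diagonal_first hd hρ hρtr hΛtrace hΛortho hΛspan
      (fun Z h2 h1 => hirr Z h1 h2) hP₂herm hP₁herm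
      hP₂orth hP₁orth hP₂ne hP₁ne hP₂sum hP₁sum hspec₂ hspec₁ hq₂ hq₁
      (fun i j => (hJ' i j).trans (add_comm _ _)) hy₂ u hu
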